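/- In the Černý automaton C_n (n ≥ 3), for every i ∈ Z_n there exist a word w over {a, b} of length at most n and a state q ∈ Z_n such that δ_w⁻¹({q}) = {i, i+1 mod n}. Consequently, the two-element subsets of Z_n occurring as preimages of singletons under words are exactly the n cyclically adjacent pairs {i, i+1 mod n}, i ∈ Z_n. -/

import Mathlib

/-- The two-letter alphabet of the Černý automaton. -/
inductive Letter
  | a
  | b
deriving DecidableEq

/-- The action of a letter of the Černý automaton `C_n` on the state set `ZMod n`:
`a` sends `i` to `i + 1 (mod n)`, and `b` sends `n - 1` to `0` and fixes every other state. -/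
def step (n : ℕ) : Letter → ZMod n → ZMod n
  | Letter.a, p => p + 1
  | Letter.b, p => if p = -1 then 0 else p

/-- The map `δ_w` induced by a word `w`, applying letters left to right. -/
def run (n : ℕ) : List Letter → ZMod n → ZMod n
  | [], p => p
  | x :: w, p => run n w (step n x p)

def OneEntry (n : ℕ) (S : Set (ZMod n)) : Prop :=
  ∀ i j : ZMod n, i ∉ S → i + 1 ∈ S → j ∉ S → j + 1 ∈ S → i = j

theorem oneEntry_a (n : ℕ) (S : Set (ZMod n)) (h : OneEntry n S) :
    OneEntry n {p | step n Letter.a p ∈ S} := by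
  intro i j h1 h2 h3 h4
  exact add_right_cancel (h (i + 1) (j + 1) h1 h2 h3 h4)

theorem oneEntry_b (n : ℕ) (S : Set (ZMod n)) (h : OneEntry n S) :
    OneEntry n {p | step n Letter.b p ∈ S} := by
  have key : ∀ i : ZMod n, step n Letter.b i ∉ S → step n Letter.b (i + 1) ∈ S →
      i ≠ -1 ∧ ((i ∉ S ∧ i + 1 ∈ S) ∨ (i + 1 = -1 ∧ (-1 : ZMod n) ∉ S ∧ -1 + 1 ∈ S)) := by
    intro i h1 h2
    by_cases hi : i = -1
    · subst hi
      exfalso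
      simp only [step, if_true, neg_add_cancel] at h1 h2
      split_ifs at h2 with h0
      all_goals exact h1 h2
    · refine ⟨hi, ?_⟩
      simp only [step, if_neg hi] at h1 h2
      split_ifs at h2 with h0
      · by_cases hm : (-1 : ZMod n) ∈ S
        · left
          exact ⟨h1, h0 ▸ hm⟩
        · right
          refine ⟨h0, hm, ?_⟩
          simpa using h2
      · exact Or.inl ⟨h1, h2⟩
  intro i j h1 h2 h3 h4
  obtain ⟨hi, ⟨a1, a2⟩ | ⟨a1, a2, a3⟩⟩ := key i h1 h2 <;>
  obtain ⟨hj, ⟨b1, b2⟩ | ⟨b1, b2, b3⟩⟩ := key j h3 h4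
  · exact h i j a1 a2 b1 b2
  · exact absurd (h i (-1) a1 a2 b2 b3) hi
  · exact absurd (h j (-1) b1 b2 a2 a3) hj
  · exact add_right_cancel (a1.trans b1.symm)

theorem oneEntry_run (n : ℕ) (q : ZMod n) (w : List Letter) :
    OneEntry n {p | run n w p = q} := by
  induction w with
  | nil =>
    intro i j _ h2 _ h4
    exact add_right_cancel (Eq.trans h2 (Eq.symm h4))
  | cons x w ih =>
    cases x
    · exact oneEntry_a n _ ih
    · exact oneEntry_b n _ ih

theorem run_rep (n : ℕ) (k : ℕ) (p : ZMod n) :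
    run n (List.replicate k Letter.a ++ [Letter.b]) p = step n Letter.b (p + k) := by
  induction k generalizing p with
  | zero => simp [run]
  | succ k ih =>
    rw [List.replicate_succ, List.cons_append, run, ih]
    congr 1
    change p + 1 + (k : ZMod n) = _
    push_cast
    ring

theorem exists_word (n : ℕ) (hn : 3 ≤ n) (i : ZMod n) : ∃ w : List Letter, w.length ≤ n ∧
      ∃ q : ZMod n, {p : ZMod n | run n w p = q} = {i, i + 1} := by
  have : NeZero n := ⟨by omega⟩
  refine ⟨List.replicate (-1 - i).val Letter.a ++ [Letter.b], ?_, 0, ?_⟩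
  · have := ZMod.val_lt (-1 - i)
    simp
    omega
  · ext p
    simp only [Set.mem_ofPred_eq, run_rep, ZMod.natCast_zmod_val, step, Set.mem_insert_iff,
      Set.mem_singleton_iff]
    split_ifs with h
    · simp only [true_iff]
      left
      linear_combination h
    · constructor
      · intro h2
        right
        linear_combination h2
      · rintro (h2 | h2)
        · exact absurd (by rw [h2]; ring) h
        · rw [h2]; ring

/-- In the Černý automaton `C_n` (`n ≥ 3`), for every `i ∈ ZMod n` there are a word `w`
of length at most `n` and a state `q` whose singleton preimage under `δ_w` is
`{i, i + 1}`. Consequently, the two-element subsets of `ZMod n` occurring as preimages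
of singletons under words are exactly the `n` cyclically adjacent pairs `{i, i + 1}`. -/
theorem cerny_adjacent_pairs_are_preimages (n : ℕ) (hn : 3 ≤ n) :
    (∀ i : ZMod n, ∃ w : List Letter, w.length ≤ n ∧
      ∃ q : ZMod n, {p : ZMod n | run n w p = q} = {i, i + 1}) ∧
    (∀ S : Set (ZMod n),
      ((∃ w : List Letter, ∃ q : ZMod n, {p : ZMod n | run n w p = q} = S) ∧ S.ncard = 2)
        ↔ ∃ i : ZMod n, S = {i, i + 1}) := by
  have : Fact (1 < n) := ⟨by omega⟩
  refine ⟨exists_word n hn, fun S => ⟨?_, ?_⟩⟩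
  · rintro ⟨⟨w, q, rfl⟩, hc⟩
    have hS := oneEntry_run n q w
    obtain ⟨x, y, hxy, he⟩ := Set.ncard_eq_two.mp hc
    rw [he] at hS ⊢
    by_cases h1 : x - 1 = y
    · exact ⟨y, by rw [← h1, sub_add_cancel, Set.pair_comm]⟩
    by_cases h2 : y - 1 = x
    · exact ⟨x, by rw [← h2, sub_add_cancel]⟩
    exact absurd (sub_left_injective
      (hS (x - 1) (y - 1) (by simp [h1]) (by simp) (by simp [h2]) (by simp))) hxy
  · rintro ⟨i, rfl⟩
    obtain ⟨w, _, q, h⟩ := exists_word n hn i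
    exact ⟨⟨w, q, h⟩, Set.ncard_pair (by simp)⟩
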